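/- Let κ, m ∈ ℝ, η̄ > 0, β ∈ ℂ, ξ ∈ ℂ. Let C, D : ℝ → ℂ be differentiable with D'(τ) = ½(−ξ² + iξ) − βD(τ) + ½η̄²D(τ)² and C'(τ) = κmD(τ) for all τ, and set G(τ, v) := exp(C(τ) + vD(τ)). Let S₀, S₁ : ℝ → ℂ be arbitrary functions, and let g₀, g₁, g₂ : ℝ → ℂ be differentiable with g₂'(τ) = −2(β − η̄²D(τ)) g₂(τ) + S₁(τ), g₁'(τ) = −(β − η̄²D(τ)) g₁(τ) + (2κm + η̄²) g₂(τ) + S₀(τ), g₀'(τ) = κm g₁(τ), and g₀(0) = g₁(0) = g₂(0) = 0. Define P(τ, v) := (g₀(τ) + v g₁(τ) + v² g₂(τ)) G(τ, v). Then P(0, v) = 0 for all v, and for every (τ, v) ∈ ℝ × ℝ, −∂P/∂τ + ½v(−ξ² + iξ)P + (κm − βv)∂P/∂v + ½η̄²v ∂²P/∂v² = −v(S₀(τ) + v S₁(τ)) G(τ, v). -/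

import Mathlib

/-!
The Heston operator `𝓛` is second order only in the variance `v`, with diffusion coefficient `s v`,
so it obeys the product rule `𝓛 (Q G) = Q (𝓛 G) + G (𝓛₀ Q) + s v ∂_v Q ∂_v G`, where `𝓛₀` is `𝓛`
without its zeroth-order term. The Riccati system says that `G = exp (C + v D)` satisfies `𝓛 G = 0`,
and `∂_v G = D G`; hence `𝓛 (Q G) = (𝓛₀ Q + s v D ∂_v Q) G`. For `Q` quadratic in `v` the factor in
parentheses is again quadratic in `v`, and the linear system for `g₀, g₁, g₂` is the comparison of
its coefficients with those of `-v (S₀ + v S₁)`.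
-/

open Complex

/-- The Fourier-transformed Heston operator
`-∂_τ + ½ v q + (b - β v) ∂_v + ½ s v ∂_v²`. In the notation of the Heston model `q = -ξ² + iξ`,
`b = κ m` and `s = η̄²`. -/
noncomputable def hestonOperator (q b β s : ℂ) (P : ℝ → ℝ → ℂ) (τ v : ℝ) : ℂ :=
  -deriv (fun τ' ↦ P τ' v) τ + (1 / 2) * v * q * P τ v + (b - β * v) * deriv (P τ) v
    + (1 / 2) * s * v * deriv (deriv (P τ)) v

/-- The exponential-affine function `exp (C τ + v D τ)` of the variance, the form of the
Fourier-transformed Heston kernel `G`. -/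
noncomputable def expAffine (C D : ℝ → ℂ) (τ v : ℝ) : ℂ :=
  exp (C τ + v * D τ)

/-- The quadratic polynomial `g₀ τ + v g₁ τ + v² g₂ τ` in the variance, the prefactor of the
slow-scale correction. -/
def quadraticPrefactor (g₀ g₁ g₂ : ℝ → ℂ) (τ v : ℝ) : ℂ :=
  g₀ τ + v * g₁ τ + v ^ 2 * g₂ τ

theorem deriv_deriv_fun_mul {𝕜 𝔸 : Type*} [NontriviallyNormedField 𝕜] [NormedRing 𝔸]
    [NormedAlgebra 𝕜 𝔸] {f g : 𝕜 → 𝔸} {x : 𝕜} (hf : ContDiffAt 𝕜 2 f x)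
    (hg : ContDiffAt 𝕜 2 g x) :
    deriv (deriv fun y ↦ f y * g y) x =
      f x * deriv (deriv g) x + 2 * deriv f x * deriv g x + deriv (deriv f) x * g x := by
  simpa [Finset.sum_range_succ, iteratedDeriv_succ] using iteratedDeriv_fun_mul hf hg

theorem hestonOperator_mul {q b β s : ℂ} {Q G : ℝ → ℝ → ℂ} {τ v : ℝ}
    (hQτ : DifferentiableAt ℝ (fun τ' ↦ Q τ' v) τ) (hGτ : DifferentiableAt ℝ (fun τ' ↦ G τ' v) τ)
    (hQv : ContDiffAt ℝ 2 (Q τ) v) (hGv : ContDiffAt ℝ 2 (G τ) v) :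
    hestonOperator q b β s (fun τ' v' ↦ Q τ' v' * G τ' v') τ v =
      Q τ v * hestonOperator q b β s G τ v + G τ v * hestonOperator 0 b β s Q τ v
        + s * v * deriv (Q τ) v * deriv (G τ) v := by
  have hv : deriv (fun v' ↦ Q τ v' * G τ v') v = deriv (Q τ) v * G τ v + Q τ v * deriv (G τ) v :=
    deriv_fun_mul (hQv.differentiableAt two_ne_zero) (hGv.differentiableAt two_ne_zero)
  simp only [hestonOperator, deriv_fun_mul hQτ hGτ, hv, deriv_deriv_fun_mul hQv hGv]
  ring

section ExpAffine

variable {C D : ℝ → ℂ} {τ : ℝ}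

theorem hasDerivAt_expAffine_time {C' D' : ℂ} (hC : HasDerivAt C C' τ) (hD : HasDerivAt D D' τ)
    (v : ℝ) :
    HasDerivAt (fun τ' ↦ expAffine C D τ' v) (expAffine C D τ v * (C' + v * D')) τ :=
  (hC.add (hD.const_mul (v : ℂ))).cexp

theorem deriv_expAffine (C D : ℝ → ℂ) (τ : ℝ) :
    deriv (expAffine C D τ) = fun v ↦ D τ * expAffine C D τ v := by
  ext v
  have h : HasDerivAt (expAffine C D τ) (exp (C τ + v * D τ) * (1 * D τ)) v :=
    ((ofRealCLM.hasDerivAt.mul_const (D τ)).const_add (C τ)).cexp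
  rw [h.deriv, expAffine]
  ring

theorem contDiff_expAffine (C D : ℝ → ℂ) (τ : ℝ) {n : WithTop ℕ∞} :
    ContDiff ℝ n (expAffine C D τ) :=
  (contDiff_const.add (ofRealCLM.contDiff.mul contDiff_const)).cexp

theorem hestonOperator_expAffine_eq_zero {q b β s : ℂ} (hC : HasDerivAt C (b * D τ) τ)
    (hD : HasDerivAt D ((1 / 2) * q - β * D τ + (1 / 2) * s * D τ ^ 2) τ) (v : ℝ) :
    hestonOperator q b β s (expAffine C D) τ v = 0 := by
  simp only [hestonOperator, (hasDerivAt_expAffine_time hC hD v).deriv, deriv_expAffine,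
    deriv_const_mul_field]
  ring

end ExpAffine

section QuadraticPrefactor

variable {g₀ g₁ g₂ : ℝ → ℂ} {τ : ℝ}

theorem hasDerivAt_quadraticPrefactor_time {g₀' g₁' g₂' : ℂ} (h₀ : HasDerivAt g₀ g₀' τ)
    (h₁ : HasDerivAt g₁ g₁' τ) (h₂ : HasDerivAt g₂ g₂' τ) (v : ℝ) :
    HasDerivAt (fun τ' ↦ quadraticPrefactor g₀ g₁ g₂ τ' v) (g₀' + v * g₁' + v ^ 2 * g₂') τ :=
  (h₀.add (h₁.const_mul (v : ℂ))).add (h₂.const_mul ((v : ℂ) ^ 2))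

theorem deriv_quadraticPrefactor (g₀ g₁ g₂ : ℝ → ℂ) (τ : ℝ) :
    deriv (quadraticPrefactor g₀ g₁ g₂ τ) = fun v : ℝ ↦ g₁ τ + 2 * v * g₂ τ := by
  ext v
  have hv : HasDerivAt (fun v' : ℝ ↦ (v' : ℂ)) 1 v := ofRealCLM.hasDerivAt
  have h : HasDerivAt (quadraticPrefactor g₀ g₁ g₂ τ) (1 * g₁ τ + 2 * v ^ 1 * 1 * g₂ τ) v :=
    ((hv.mul_const (g₁ τ)).const_add (g₀ τ)).add ((hv.pow 2).mul_const (g₂ τ))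
  rw [h.deriv]
  ring

theorem deriv_deriv_quadraticPrefactor (g₀ g₁ g₂ : ℝ → ℂ) (τ v : ℝ) :
    deriv (deriv (quadraticPrefactor g₀ g₁ g₂ τ)) v = 2 * g₂ τ := by
  have h : HasDerivAt (fun v' : ℝ ↦ g₁ τ + 2 * v' * g₂ τ) (2 * 1 * g₂ τ) v :=
    ((ofRealCLM.hasDerivAt.const_mul 2).mul_const (g₂ τ)).const_add (g₁ τ)
  rw [deriv_quadraticPrefactor, h.deriv, mul_one]

theorem contDiff_quadraticPrefactor (g₀ g₁ g₂ : ℝ → ℂ) (τ : ℝ) {n : WithTop ℕ∞} :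
    ContDiff ℝ n (quadraticPrefactor g₀ g₁ g₂ τ) :=
  (contDiff_const.add (ofRealCLM.contDiff.mul contDiff_const)).add
    ((ofRealCLM.contDiff.pow 2).mul contDiff_const)

theorem hestonOperator_zero_quadraticPrefactor {g₀' g₁' g₂' : ℂ} (h₀ : HasDerivAt g₀ g₀' τ)
    (h₁ : HasDerivAt g₁ g₁' τ) (h₂ : HasDerivAt g₂ g₂' τ) (b β s : ℂ) (v : ℝ) :
    hestonOperator 0 b β s (quadraticPrefactor g₀ g₁ g₂) τ v =
      (-g₀' + b * g₁ τ) + v * (-g₁' - β * g₁ τ + (2 * b + s) * g₂ τ)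
        + v ^ 2 * (-g₂' - 2 * β * g₂ τ) := by
  rw [hestonOperator, (hasDerivAt_quadraticPrefactor_time h₀ h₁ h₂ v).deriv,
    deriv_deriv_quadraticPrefactor, deriv_quadraticPrefactor, quadraticPrefactor]
  ring

end QuadraticPrefactor

theorem hestonOperator_quadraticPrefactor_mul_expAffine {q b β s : ℂ} {C D g₀ g₁ g₂ : ℝ → ℂ}
    {τ : ℝ} {g₀' g₁' g₂' : ℂ} (hC : HasDerivAt C (b * D τ) τ)
    (hD : HasDerivAt D ((1 / 2) * q - β * D τ + (1 / 2) * s * D τ ^ 2) τ)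
    (h₀ : HasDerivAt g₀ g₀' τ) (h₁ : HasDerivAt g₁ g₁' τ) (h₂ : HasDerivAt g₂ g₂' τ) (v : ℝ) :
    hestonOperator q b β s
        (fun τ' v' ↦ quadraticPrefactor g₀ g₁ g₂ τ' v' * expAffine C D τ' v') τ v =
      ((-g₀' + b * g₁ τ) + v * (-g₁' - (β - s * D τ) * g₁ τ + (2 * b + s) * g₂ τ)
        + v ^ 2 * (-g₂' - 2 * (β - s * D τ) * g₂ τ)) * expAffine C D τ v := by
  rw [hestonOperator_mul
      (hasDerivAt_quadraticPrefactor_time h₀ h₁ h₂ v).differentiableAt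
      (hasDerivAt_expAffine_time hC hD v).differentiableAt
      (contDiff_quadraticPrefactor g₀ g₁ g₂ τ).contDiffAt (contDiff_expAffine C D τ).contDiffAt,
    hestonOperator_expAffine_eq_zero hC hD, hestonOperator_zero_quadraticPrefactor h₀ h₁ h₂,
    deriv_quadraticPrefactor, deriv_expAffine]
  ring

theorem heston_slow_scale_correction_general {q b β s : ℂ} {C D : ℝ → ℂ}
    (hD : ∀ τ, HasDerivAt D ((1 / 2) * q - β * D τ + (1 / 2) * s * D τ ^ 2) τ)
    (hC : ∀ τ, HasDerivAt C (b * D τ) τ) {S₀ S₁ g₀ g₁ g₂ : ℝ → ℂ}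
    (hg₂ : ∀ τ, HasDerivAt g₂ (-2 * (β - s * D τ) * g₂ τ + S₁ τ) τ)
    (hg₁ : ∀ τ, HasDerivAt g₁ (-(β - s * D τ) * g₁ τ + (2 * b + s) * g₂ τ + S₀ τ) τ)
    (hg₀ : ∀ τ, HasDerivAt g₀ (b * g₁ τ) τ)
    (hg₀0 : g₀ 0 = 0) (hg₁0 : g₁ 0 = 0) (hg₂0 : g₂ 0 = 0) :
    (∀ v, quadraticPrefactor g₀ g₁ g₂ 0 v * expAffine C D 0 v = 0) ∧
      ∀ τ v, hestonOperator q b β s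
          (fun τ' v' ↦ quadraticPrefactor g₀ g₁ g₂ τ' v' * expAffine C D τ' v') τ v =
        -v * (S₀ τ + v * S₁ τ) * expAffine C D τ v := by
  refine ⟨fun v ↦ by simp [quadraticPrefactor, hg₀0, hg₁0, hg₂0], fun τ v ↦ ?_⟩
  rw [hestonOperator_quadraticPrefactor_mul_expAffine (hC τ) (hD τ) (hg₀ τ) (hg₁ τ) (hg₂ τ)]
  ring

/-- The slow-scale correction ansatz `P(τ,v) = (g₀ + v g₁ + v² g₂) G` solves the
sourced Fourier-transformed Heston PDE
`-∂_τ P + ½v(-ξ²+iξ)P + (κm - βv)∂_v P + ½η̄²v ∂²_v P = -v(S₀ + vS₁)G`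
with zero initial condition, when `g₀, g₁, g₂` solve the stated triangular
linear ODE system. -/
theorem heston_slow_scale_correction (κ m ηb : ℝ) (hηb : 0 < ηb) (β ξ : ℂ)
    (C D : ℝ → ℂ)
    (hD : ∀ τ : ℝ, HasDerivAt D
      ((1 / 2) * (-ξ ^ 2 + I * ξ) - β * D τ + (1 / 2) * (ηb : ℂ) ^ 2 * (D τ) ^ 2) τ)
    (hC : ∀ τ : ℝ, HasDerivAt C ((κ : ℂ) * (m : ℂ) * D τ) τ)
    (G : ℝ → ℝ → ℂ)
    (hG : G = fun (τ v : ℝ) => Complex.exp (C τ + (v : ℂ) * D τ))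
    (S₀ S₁ : ℝ → ℂ) (g₀ g₁ g₂ : ℝ → ℂ)
    (hg₂ : ∀ τ : ℝ, HasDerivAt g₂
      (-2 * (β - (ηb : ℂ) ^ 2 * D τ) * g₂ τ + S₁ τ) τ)
    (hg₁ : ∀ τ : ℝ, HasDerivAt g₁
      (-(β - (ηb : ℂ) ^ 2 * D τ) * g₁ τ
        + (2 * (κ : ℂ) * (m : ℂ) + (ηb : ℂ) ^ 2) * g₂ τ + S₀ τ) τ)
    (hg₀ : ∀ τ : ℝ, HasDerivAt g₀ ((κ : ℂ) * (m : ℂ) * g₁ τ) τ)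
    (hg₀0 : g₀ 0 = 0) (hg₁0 : g₁ 0 = 0) (hg₂0 : g₂ 0 = 0)
    (P : ℝ → ℝ → ℂ)
    (hP : P = fun (τ v : ℝ) => (g₀ τ + (v : ℂ) * g₁ τ + (v : ℂ) ^ 2 * g₂ τ) * G τ v) :
    (∀ v : ℝ, P 0 v = 0) ∧
      ∀ τ v : ℝ,
        -deriv (fun τ' : ℝ => P τ' v) τ
        + (1 / 2) * (v : ℂ) * (-ξ ^ 2 + I * ξ) * P τ v
        + ((κ : ℂ) * (m : ℂ) - β * (v : ℂ)) * deriv (fun v' : ℝ => P τ v') v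
        + (1 / 2) * (ηb : ℂ) ^ 2 * (v : ℂ) *
            deriv (fun v' : ℝ => deriv (fun v'' : ℝ => P τ v'') v') v
        = -(v : ℂ) * (S₀ τ + (v : ℂ) * S₁ τ) * G τ v := by
  subst hP hG
  exact heston_slow_scale_correction_general hD hC hg₂ (by simpa only [mul_assoc (2 : ℂ)] using hg₁)
    hg₀ hg₀0 hg₁0 hg₂0
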